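/- Assume the damping assumption holds at E > 0. If w ∈ p⁻¹({E}) and T > 0 are such that φ^T(w) = w (a periodic trajectory of energy E and period T), then ∫₀^T V₂(φ^t(w)) dt > 0. -/

import Mathlib

/-!
Along a periodic orbit put `f t = V₂ (x̄ (t, w))`, a continuous `T`-periodic function, and
`F t = ∫₀ᵗ f`. If `∫₀ᵀ f ≤ 0` then `F (t + T) ≤ F t`, so the maximum of `F` over `[0, T]`, attained
at some `s`, is its maximum over `[0, ∞)`. Hence `∫ₛ^{s+t} f ≤ 0` for every `t ≥ 0`, that is,
the trajectory issued from `φˢ(w)` never accumulates a positive integral of `V₂`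
(`exists_forall_integral_shift_nonpos`). But `φˢ(w)` has energy `E` (`psym_flow`, conservation of
energy) and a bounded orbit, so this contradicts the damping assumption at `φˢ(w)`.

The group law `φᵗ ∘ φˢ = φᵗ⁺ˢ` (`flow_flow`), which gives the periodicity and identifies the orbit
of `φˢ(w)`, is uniqueness for the ODE: the long-range bound on second derivatives makes `∇V₁`
globally Lipschitz (`lipschitzWith_gradient`).
-/

open MeasureTheory Filter Topology Metric Set ENNReal Real

noncomputable section

/-- `ℝⁿ` as a Euclidean space. -/
abbrev Rn (n : ℕ) := EuclideanSpace ℝ (Fin n)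

variable {n : ℕ}

/-- The Japanese bracket `⟨x⟩ = (1 + |x|)^{1/2}`. -/
def jap (x : Rn n) : ℝ := (1 + ‖x‖) ^ ((1 : ℝ) / 2)

/-- `V` is smooth and of long range: all derivatives of order `k` are bounded by
`c_k ⟨x⟩^{-ρ-k}` for some `ρ > 0`. -/
def LongRange (V : Rn n → ℝ) : Prop :=
  ContDiff ℝ (⊤ : ℕ∞) V ∧ ∃ ρ > (0 : ℝ), ∀ k : ℕ, ∃ c ≥ (0 : ℝ),
    ∀ x : Rn n, ‖iteratedFDeriv ℝ k V x‖ ≤ c * jap x ^ (-(ρ + k))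

/-- `Φ` is the Hamiltonian flow of `p(x,ξ) = |ξ|² + V₁(x)`:
`∂ₜ x̄ = 2 ξ̄`, `∂ₜ ξ̄ = −∇V₁(x̄)`, `Φ⁰(w) = w`. -/
def IsFlow (V₁ : Rn n → ℝ) (Φ : ℝ → Rn n × Rn n → Rn n × Rn n) : Prop :=
  (∀ w, Φ 0 w = w) ∧
  ∀ w t, HasDerivAt (fun s => Φ s w) ((2 : ℝ) • (Φ t w).2, -gradient V₁ (Φ t w).1) t

/-- The classical symbol `p(x,ξ) = |ξ|² + V₁(x)`. -/
def psym (V₁ : Rn n → ℝ) (w : Rn n × Rn n) : ℝ := ‖w.2‖ ^ 2 + V₁ w.1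

/-- The trapped set `Ω_b({E})` at energy `E`. -/
def OmegaB (V₁ : Rn n → ℝ) (Φ : ℝ → Rn n × Rn n → Rn n × Rn n) (E : ℝ) :
    Set (Rn n × Rn n) :=
  {w | psym V₁ w = E ∧ ∃ M : ℝ, ∀ t : ℝ, ‖(Φ t w).1‖ ≤ M}

/-- The damping assumption at energy `E`: on every trapped trajectory the absorption
index `V₂` has positive integral up to some positive time. -/
def Damping (V₁ V₂ : Rn n → ℝ) (Φ : ℝ → Rn n × Rn n → Rn n × Rn n) (E : ℝ) : Prop :=
  ∀ w ∈ OmegaB V₁ Φ E, ∃ T > (0 : ℝ), 0 < ∫ t in (0 : ℝ)..T, V₂ (Φ t w).1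

theorem one_le_jap (x : Rn n) : 1 ≤ jap x :=
  Real.one_le_rpow (by linarith [norm_nonneg x]) (by norm_num)

theorem lipschitzWith_gradient {V : Rn n → ℝ} (hV : LongRange V) :
    ∃ K : NNReal, LipschitzWith K (gradient V) := by
  obtain ⟨hsm, ρ, hρ, hb⟩ := hV
  obtain ⟨c, hc, hb⟩ := hb 2
  refine ⟨c.toNNReal, ?_⟩
  have hd : Differentiable ℝ (fderiv ℝ V) :=
    (hsm.fderiv_right (m := 1) (by norm_cast)).differentiable (by norm_num)
  have hL : LipschitzWith c.toNNReal (fderiv ℝ V) := by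
    refine lipschitzWith_of_nnnorm_fderiv_le hd fun x => ?_
    rw [← NNReal.coe_le_coe, coe_nnnorm, ← norm_iteratedFDeriv_one, norm_iteratedFDeriv_fderiv,
      Real.coe_toNNReal c hc]
    refine (hb x).trans ?_
    have h1 : jap x ^ (-(ρ + (2 : ℕ))) ≤ 1 :=
      Real.rpow_le_one_of_one_le_of_nonpos (one_le_jap x) (by push_cast; linarith)
    exact mul_le_of_le_one_right hc h1
  have h := (InnerProductSpace.toDual ℝ (Rn n)).symm.lipschitz.comp hL
  rwa [one_mul] at h

theorem lipschitzWith_hamiltonField {V : Rn n → ℝ} (hV : LongRange V) :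
    ∃ K : NNReal, LipschitzWith K
      (fun w : Rn n × Rn n => ((2 : ℝ) • w.2, -gradient V w.1)) := by
  obtain ⟨K, hK⟩ := lipschitzWith_gradient hV
  exact ⟨_, ((lipschitzWith_smul (2 : ℝ)).comp LipschitzWith.prod_snd).prodMk
    (hK.neg.comp LipschitzWith.prod_fst)⟩

theorem flow_flow {V₁ : Rn n → ℝ} {Φ : ℝ → Rn n × Rn n → Rn n × Rn n}
    (hV₁ : LongRange V₁) (hΦ : IsFlow V₁ Φ) (w : Rn n × Rn n) (s t : ℝ) :
    Φ t (Φ s w) = Φ (t + s) w := by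
  obtain ⟨K, hK⟩ := lipschitzWith_hamiltonField hV₁
  have h := ODE_solution_unique_univ (t₀ := 0) (K := K) (s := fun _ => univ)
    (v := fun _ w => ((2 : ℝ) • w.2, -gradient V₁ w.1))
    (f := fun r => Φ r (Φ s w)) (g := fun r => Φ (r + s) w)
    (fun _ => hK.lipschitzOnWith)
    (fun r => ⟨hΦ.2 (Φ s w) r, mem_univ _⟩)
    (fun r => ⟨(hΦ.2 w (r + s)).comp_add_const r s, mem_univ _⟩)
    (by simp [hΦ.1])
  exact congrFun h t

theorem psym_flow {V₁ : Rn n → ℝ} {Φ : ℝ → Rn n × Rn n → Rn n × Rn n}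
    (hV₁ : LongRange V₁) (hΦ : IsFlow V₁ Φ) (w : Rn n × Rn n) (s : ℝ) :
    psym V₁ (Φ s w) = psym V₁ w := by
  have hd : ∀ t, HasDerivAt (fun r => psym V₁ (Φ r w)) 0 t := by
    intro t
    have h1 : HasDerivAt (fun r => (Φ r w).1) ((2 : ℝ) • (Φ t w).2) t := (hΦ.2 w t).fst
    have h2 : HasDerivAt (fun r => (Φ r w).2) (-gradient V₁ (Φ t w).1) t := (hΦ.2 w t).snd
    have hg := (hV₁.1.differentiable (by norm_num) (Φ t w).1).hasGradientAt.hasFDerivAt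
    have h := h2.norm_sq.add (hg.comp_hasDerivAt t h1)
    refine h.congr_deriv ?_
    rw [InnerProductSpace.toDual_apply_apply, inner_neg_right, inner_smul_right,
      real_inner_comm]
    ring
  have h := is_const_of_deriv_eq_zero (fun t => (hd t).differentiableAt)
    (fun t => (hd t).deriv) s 0
  simpa [hΦ.1] using h

/-- If a continuous periodic function has nonpositive integral over a period, then its
primitive attains its maximum over `[0, ∞)`; starting from the maximizer, no later integral is
positive. -/
theorem exists_forall_integral_shift_nonpos {f : ℝ → ℝ} {T : ℝ} (hT : 0 < T)
    (hf : Continuous f) (hper : Function.Periodic f T) (hI : ∫ t in (0 : ℝ)..T, f t ≤ 0) :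
    ∃ s : ℝ, ∀ t > 0, ∫ r in (0 : ℝ)..t, f (r + s) ≤ 0 := by
  have hint : ∀ a b, IntervalIntegrable f volume a b := fun a b => hf.intervalIntegrable a b
  obtain ⟨s, hs, hmax⟩ := isCompact_Icc.exists_isMaxOn (nonempty_Icc.2 hT.le)
    (intervalIntegral.continuous_primitive hint 0).continuousOn (s := Icc 0 T)
  have hstep : ∀ t, ∫ r in (0 : ℝ)..(t + T), f r ≤ ∫ r in (0 : ℝ)..t, f r := by
    intro t
    have h1 := intervalIntegral.integral_add_adjacent_intervals (hint 0 t) (hint t (t + T))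
    have h2 := hper.intervalIntegral_add_eq t 0
    rw [zero_add] at h2
    linarith
  have hmul : ∀ (k : ℕ) (t : ℝ),
      ∫ r in (0 : ℝ)..(t + k * T), f r ≤ ∫ r in (0 : ℝ)..t, f r := by
    intro k t
    induction k with
    | zero => simp
    | succ k ih =>
      have e : t + ((k + 1 : ℕ) : ℝ) * T = t + k * T + T := by push_cast; ring
      rw [e]
      exact (hstep _).trans ih
  have hall : ∀ u, 0 ≤ u → ∫ r in (0 : ℝ)..u, f r ≤ ∫ r in (0 : ℝ)..s, f r := by
    intro u hu
    -- Reduce `u` modulo `T` into `[0, T)`.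
    have hq : 0 ≤ u / T := div_nonneg hu hT.le
    have h1 : (⌊u / T⌋₊ : ℝ) * T ≤ u := (le_div_iff₀ hT).1 (Nat.floor_le hq)
    have h2 : u < (⌊u / T⌋₊ + 1 : ℝ) * T := (div_lt_iff₀ hT).1 (Nat.lt_floor_add_one _)
    have h3 := hmul ⌊u / T⌋₊ (u - ⌊u / T⌋₊ * T)
    rw [sub_add_cancel] at h3
    exact h3.trans (hmax (show u - ⌊u / T⌋₊ * T ∈ Icc 0 T from ⟨by linarith, by linarith⟩))
  refine ⟨s, fun t ht => ?_⟩
  rw [intervalIntegral.integral_comp_add_right, zero_add]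
  have h1 := intervalIntegral.integral_add_adjacent_intervals (hint 0 s) (hint s (t + s))
  linarith [hall (t + s) (by linarith [hs.1])]

/-- On a periodic trajectory of energy `E` and period `T`, the damping assumption at `E`
forces `∫₀^T V₂∘φ^t dt > 0`. -/
theorem stmt8
    (V₁ V₂ : Rn n → ℝ) (Φ : ℝ → Rn n × Rn n → Rn n × Rn n)
    (hV₁ : LongRange V₁) (hΦ : IsFlow V₁ Φ)
    (hV₂c : Continuous V₂) (hV₂b : ∃ M : ℝ, ∀ x, |V₂ x| ≤ M)
    (E : ℝ) (hE : 0 < E) (hdamp : Damping V₁ V₂ Φ E)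
    (w : Rn n × Rn n) (hw : psym V₁ w = E)
    (T : ℝ) (hT : 0 < T) (hper : Φ T w = w) :
    0 < ∫ t in (0 : ℝ)..T, V₂ (Φ t w).1 := by
  have hcont : Continuous fun t => Φ t w :=
    continuous_iff_continuousAt.2 fun t => (hΦ.2 w t).continuousAt
  have hP : Function.Periodic (fun t => Φ t w) T := fun t => by
    simpa [hper] using (flow_flow hV₁ hΦ w T t).symm
  by_contra hneg
  obtain ⟨s, hs⟩ := exists_forall_integral_shift_nonpos (f := fun t => V₂ (Φ t w).1) hT
    (hV₂c.comp hcont.fst) (hP.comp fun z => V₂ z.1) (not_lt.1 hneg)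
  have hmem : Φ s w ∈ OmegaB V₁ Φ E := by
    refine ⟨(psym_flow hV₁ hΦ w s).trans hw, ?_⟩
    -- A continuous periodic curve has compact, hence bounded, range.
    obtain ⟨M, hM⟩ := (hP.compact_of_continuous hT.ne' hcont).isBounded.exists_norm_le
    refine ⟨M, fun t => ?_⟩
    rw [flow_flow hV₁ hΦ]
    exact (norm_fst_le _).trans (hM _ (mem_range_self _))
  obtain ⟨t, ht, hpos⟩ := hdamp _ hmem
  simp only [flow_flow hV₁ hΦ] at hpos
  exact absurd hpos (not_lt.2 (hs t ht))
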